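/- Let I ⊂ R and J ⊂ T be nonzero proper monomial ideals, identified with their extensions to S = R ⊗_K T, and let k ≥ 1. Then v((I+J)^k) = min over pairs (p,q), with p ⊂ R and q ⊂ T nonzero monomial prime ideals satisfying p + q ∈ Ass((I+J)^k), of min{ v_p(I^{k−ℓ}) + v_q(J^{ℓ+1}) : 0 ≤ ℓ < k, p ∈ Ass(I^{k−ℓ}), q ∈ Ass(J^{ℓ+1}) }, where v_p(I^{k−ℓ}) is computed in R, v_q(J^{ℓ+1}) is computed in T, and v((I+J)^k) is computed in S. -/

import Mathlib

open MvPolynomial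

noncomputable section

/-- The set of associated primes `Ass(L)` of the quotient by an ideal `L`. -/
def assOf {A : Type} [CommRing A] (L : Ideal A) : Set (Ideal A) :=
  associatedPrimes A (A ⧸ L)

/-- `𝔄` is the stable value `Ass^∞(L)` of `Ass(L^k)` for all large `k`. -/
def IsStableAssValue {A : Type} [CommRing A] (L : Ideal A) (𝔄 : Set (Ideal A)) : Prop :=
  ∃ N : ℕ, ∀ k : ℕ, N ≤ k → assOf (L ^ k) = 𝔄

/-- `Ass^*(L) = ⋃_{k ≥ 1} Ass(L^k)`. -/
def assStar {A : Type} [CommRing A] (L : Ideal A) : Set (Ideal A) :=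
  {p | ∃ k : ℕ, 1 ≤ k ∧ p ∈ assOf (L ^ k)}

/-- The local v-number `v_p(L)`: the least degree of a homogeneous `f` with `(L : f) = p`. -/
def vnum {σ K : Type} [Field K] (L p : Ideal (MvPolynomial σ K)) : ℕ :=
  sInf {d : ℕ | ∃ f : MvPolynomial σ K, f.IsHomogeneous d ∧ L.colon (Ideal.span {f}) = p}

/-- The v-number `v(L) = min_{p ∈ Ass(L)} v_p(L)`. -/
def vnumber {σ K : Type} [Field K] (L : Ideal (MvPolynomial σ K)) : ℕ :=
  sInf {d : ℕ | ∃ p ∈ assOf L, ∃ f : MvPolynomial σ K,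
    f.IsHomogeneous d ∧ L.colon (Ideal.span {f}) = p}

/-- The initial degree `α(L)`: the least `d` such that `L` contains a nonzero
homogeneous element of degree `d`. -/
def alphaDeg {σ K : Type} [Field K] (L : Ideal (MvPolynomial σ K)) : ℕ :=
  sInf {d : ℕ | ∃ f ∈ L, f ≠ 0 ∧ MvPolynomial.IsHomogeneous f d}

/-- A graded (homogeneous) ideal: one containing all homogeneous components
of each of its elements. -/
def IsGradedIdeal {σ K : Type} [Field K] (I : Ideal (MvPolynomial σ K)) : Prop :=
  ∀ f ∈ I, ∀ d : ℕ, homogeneousComponent d f ∈ I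

/-- A monomial ideal: an ideal generated by monomials. -/
def IsMonomialIdeal {σ K : Type} [Field K] (I : Ideal (MvPolynomial σ K)) : Prop :=
  ∃ G : Set (σ →₀ ℕ), I = Ideal.span ((fun a => (monomial a (1 : K))) '' G)

section MonomialIdeals

variable {σ K : Type} [Field K] {L M : Ideal (MvPolynomial σ K)}

theorem IsMonomialIdeal.mem_iff (hL : IsMonomialIdeal L) {f : MvPolynomial σ K} :
    f ∈ L ↔ ∀ u ∈ f.support, monomial u (1 : K) ∈ L := by
  classical
  obtain ⟨G, rfl⟩ := hL
  simp only [mem_ideal_span_monomial_image, support_monomial, one_ne_zero, if_false,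
    Finset.mem_singleton, forall_eq]

theorem monomial_mem_of_le {u w : σ →₀ ℕ} (h : monomial u (1 : K) ∈ L) (huw : u ≤ w) :
    monomial w (1 : K) ∈ L := by
  obtain ⟨c, rfl⟩ := exists_add_of_le huw
  rw [← one_mul (1 : K), ← monomial_mul]
  exact L.mul_mem_right _ h

theorem isMonomialIdeal_top : IsMonomialIdeal (⊤ : Ideal (MvPolynomial σ K)) :=
  ⟨{0}, by
    rw [Set.image_singleton, eq_comm, Ideal.eq_top_iff_one]
    exact Ideal.subset_span rfl⟩

theorem IsMonomialIdeal.mul (hL : IsMonomialIdeal L) (hM : IsMonomialIdeal M) :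
    IsMonomialIdeal (L * M) := by
  obtain ⟨G, rfl⟩ := hL
  obtain ⟨H, rfl⟩ := hM
  refine ⟨Set.image2 (· + ·) G H, ?_⟩
  rw [Ideal.span_mul_span', ← Set.image2_mul, Set.image2_image_left, Set.image2_image_right,
    Set.image_image2]
  simp only [monomial_mul, one_mul]

theorem IsMonomialIdeal.pow (hL : IsMonomialIdeal L) (a : ℕ) : IsMonomialIdeal (L ^ a) := by
  induction a with
  | zero => simpa [Ideal.one_eq_top] using isMonomialIdeal_top
  | succ a ih => rw [pow_succ]; exact ih.mul hL

theorem IsMonomialIdeal.exists_add_le_of_monomial_mem_mul (hL : IsMonomialIdeal L)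
    (hM : IsMonomialIdeal M) {u : σ →₀ ℕ} (hu : monomial u (1 : K) ∈ L * M) :
    ∃ g h : σ →₀ ℕ, monomial g (1 : K) ∈ L ∧ monomial h (1 : K) ∈ M ∧ g + h ≤ u := by
  classical
  obtain ⟨G, rfl⟩ := hL
  obtain ⟨H, rfl⟩ := hM
  rw [Ideal.span_mul_span', ← Set.image2_mul, Set.image2_image_left, Set.image2_image_right] at hu
  simp only [monomial_mul, one_mul] at hu
  rw [← Set.image_image2 (fun a b => a + b) (fun a => monomial a (1 : K)),
    mem_ideal_span_monomial_image] at hu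
  obtain ⟨_, ⟨g, hg, h, hh, rfl⟩, hle⟩ := hu u (by simp [support_monomial])
  exact ⟨g, h, Ideal.subset_span ⟨g, hg, rfl⟩, Ideal.subset_span ⟨h, hh, rfl⟩, hle⟩

/-- Multiplying a monomial by one variable raises its order along a monomial ideal by at
most one. -/
theorem IsMonomialIdeal.monomial_mem_pow_of_add_single (hL : IsMonomialIdeal L) (i : σ) (c : ℕ) :
    ∀ {x : σ →₀ ℕ}, monomial (x + Finsupp.single i 1) (1 : K) ∈ L ^ (c + 1) →
      monomial x (1 : K) ∈ L ^ c := by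
  classical
  induction c with
  | zero => intro x _; simp
  | succ c ih =>
    intro x hx
    rw [pow_succ'] at hx
    obtain ⟨g, h, hg, hh, hle⟩ := hL.exists_add_le_of_monomial_mem_mul (hL.pow _) hx
    by_cases hgi : g i = 0
    · have hgx : g ≤ x := fun j => by
        have := hle j
        by_cases hj : j = i
        · subst hj; omega
        · simp [Ne.symm hj] at this; omega
      obtain ⟨x', rfl⟩ := exists_add_of_le hgx
      have hx' : monomial x' (1 : K) ∈ L ^ c :=
        ih (monomial_mem_of_le hh (le_of_add_le_add_left (hle.trans (add_assoc _ _ _).le)))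
      rw [pow_succ', ← one_mul (1 : K), ← monomial_mul]
      exact Ideal.mul_mem_mul hg hx'
    · refine monomial_mem_of_le hh fun j => ?_
      have := hle j
      by_cases hj : j = i
      · subst hj; simp at this; omega
      · simp [Ne.symm hj] at this; omega

theorem monomial_mem_pow_smul {u : σ →₀ ℕ} (h : monomial u (1 : K) ∈ L) (a : ℕ) :
    monomial (a • u) (1 : K) ∈ L ^ a := by
  simpa [monomial_pow] using Ideal.pow_mem_pow h a

theorem IsMonomialIdeal.exists_monomial_mem (hL : IsMonomialIdeal L) (h0 : L ≠ ⊥) :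
    ∃ u : σ →₀ ℕ, monomial u (1 : K) ∈ L := by
  obtain ⟨f, hf, hf0⟩ := Submodule.exists_mem_ne_zero_of_ne_bot h0
  obtain ⟨u, hu⟩ := support_nonempty.mpr hf0
  exact ⟨u, hL.mem_iff.mp hf u hu⟩

theorem degree_eq_of_mem_support {f : MvPolynomial σ K} {d : ℕ} (hf : f.IsHomogeneous d)
    {u : σ →₀ ℕ} (hu : u ∈ f.support) : u.degree = d := by
  rw [Finsupp.degree_eq_weight_one]
  exact hf (mem_support_iff.mp hu)

/-- The colon of `L` by the monomial with exponent `u` is, on the level of exponents, the prime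
generated by the variables in `A`. -/
def MonomialColon (L : Ideal (MvPolynomial σ K)) (u : σ →₀ ℕ) (A : Set σ) : Prop :=
  ∀ w : σ →₀ ℕ, monomial (u + w) (1 : K) ∈ L ↔ ∃ i ∈ A, w i ≠ 0

theorem IsMonomialIdeal.colon_monomial (hL : IsMonomialIdeal L) {u : σ →₀ ℕ} {A : Set σ}
    (h : MonomialColon L u A) :
    L.colon (Ideal.span {monomial u (1 : K)}) =
      Ideal.span ((fun i => (X i : MvPolynomial σ K)) '' A) := by
  classical
  ext f
  rw [Ideal.mem_colon_span_singleton, hL.mem_iff]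
  refine Iff.trans ?_ mem_ideal_span_X_image.symm
  constructor
  · intro H w hw
    refine (h w).mp (H _ ?_)
    rw [mem_support_iff, add_comm, coeff_mul_monomial, mul_one]
    exact mem_support_iff.mp hw
  · intro H v hv
    rw [mem_support_iff, coeff_mul_monomial'] at hv
    split_ifs at hv with huv
    · obtain ⟨w, rfl⟩ := exists_add_of_le huv
      refine (h w).mpr (H w ?_)
      rw [add_tsub_cancel_left, mul_one] at hv
      exact mem_support_iff.mpr hv
    · exact absurd rfl hv

theorem X_mem_of_monomial_mem_prime {P : Ideal (MvPolynomial σ K)} [hP : P.IsPrime]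
    {w : σ →₀ ℕ} (hw : monomial w (1 : K) ∈ P) : ∃ i, w i ≠ 0 ∧ (X i : MvPolynomial σ K) ∈ P := by
  rw [monomial_eq, map_one, one_mul, Finsupp.prod, hP.prod_mem_iff] at hw
  obtain ⟨i, hi, hiP⟩ := hw
  exact ⟨i, Finsupp.mem_support_iff.mp hi, hP.mem_of_pow_mem _ hiP⟩

/-- If the colon of a monomial ideal by a polynomial `f` is prime, then already some monomial of
`f` has as colon the prime generated by the variables in that prime. -/
theorem IsMonomialIdeal.exists_monomialColon (hL : IsMonomialIdeal L) {f : MvPolynomial σ K}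
    {P : Ideal (MvPolynomial σ K)} [hP : P.IsPrime] (hf : ∀ g, g ∈ P ↔ g * f ∈ L) :
    ∃ u ∈ f.support, MonomialColon L u {i | (X i : MvPolynomial σ K) ∈ P} := by
  classical
  by_contra! hcon
  have key : ∀ u ∈ f.support, ∃ w : σ →₀ ℕ, monomial (u + w) (1 : K) ∈ L ∧
      ∀ i, (X i : MvPolynomial σ K) ∈ P → w i = 0 := by
    intro u hu
    by_contra! hu'
    refine hcon u hu fun w => ⟨fun h => hu' w h, ?_⟩
    rintro ⟨i, hi, hwi⟩
    have hXf := hL.mem_iff.mp ((hf _).mp hi) (Finsupp.single i 1 + u) (by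
      rw [mem_support_iff, X, coeff_monomial_mul, one_mul]
      exact mem_support_iff.mp hu)
    refine monomial_mem_of_le hXf ?_
    rw [add_comm]
    gcongr
    simpa [Nat.one_le_iff_ne_zero] using hwi
  choose! w hwL hwP using key
  have hprod : ∏ u ∈ f.support, monomial (w u) (1 : K) ∈ P := by
    rw [hf]
    suffices h : (∏ u ∈ f.support, monomial (w u) (1 : K)) *
        ∑ u ∈ f.support, monomial u (coeff u f) ∈ L by rwa [← f.as_sum] at h
    rw [Finset.mul_sum]
    refine L.sum_mem fun u hu => ?_
    rw [← Finset.prod_erase_mul _ _ hu, mul_assoc, monomial_mul, one_mul, add_comm,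
      ← mul_one (coeff u f), ← C_mul_monomial]
    exact L.mul_mem_left _ (L.mul_mem_left _ (hwL u hu))
  obtain ⟨u, hu, huP⟩ := hP.prod_mem_iff.mp hprod
  obtain ⟨i, hwi, hi⟩ := X_mem_of_monomial_mem_prime huP
  exact hwi (hwP u hu i hi)

theorem mem_assOf_iff [Finite σ] {P : Ideal (MvPolynomial σ K)} :
    P ∈ assOf L ↔ P.IsPrime ∧ ∃ f, ∀ g, g ∈ P ↔ g * f ∈ L := by
  unfold assOf
  rw [AssociatedPrimes.mem_iff, isAssociatedPrime_iff]
  refine and_congr_right fun _ => ?_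
  have hmem : ∀ f g : MvPolynomial σ K,
      g ∈ (⊥ : Submodule (MvPolynomial σ K) (MvPolynomial σ K ⧸ L)).colon
        {Ideal.Quotient.mk L f} ↔ g * f ∈ L := fun f g => by
    rw [Submodule.mem_colon_singleton, Submodule.mem_bot, ← Ideal.Quotient.eq_zero_iff_mem]
    rfl
  constructor
  · rintro ⟨x, rfl⟩
    obtain ⟨f, rfl⟩ := Ideal.Quotient.mk_surjective x
    exact ⟨f, hmem f⟩
  · rintro ⟨f, hf⟩
    exact ⟨Ideal.Quotient.mk L f, Ideal.ext fun g => (hf g).trans (hmem f g).symm⟩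

theorem X_mem_span_X_image_iff {A : Set σ} {i : σ} :
    (X i : MvPolynomial σ K) ∈ Ideal.span ((fun i => (X i : MvPolynomial σ K)) '' A) ↔ i ∈ A := by
  classical
  refine mem_ideal_span_X_image.trans ?_
  simp [support_X, Finsupp.single_apply]

theorem setOf_X_mem_span_X_image (A : Set σ) :
    {i | (X i : MvPolynomial σ K) ∈ Ideal.span ((fun i => (X i : MvPolynomial σ K)) '' A)} = A :=
  Set.ext fun _ => X_mem_span_X_image_iff

theorem isPrime_span_X_image (A : Set σ) :
    (Ideal.span ((fun i => (X i : MvPolynomial σ K)) '' A)).IsPrime := by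
  classical
  set Q := Ideal.span ((fun i => (X i : MvPolynomial σ K)) '' A)
  let φ : MvPolynomial σ K →ₐ[K] MvPolynomial σ K := aeval fun i => if i ∈ A then 0 else X i
  have hφ : (Ideal.Quotient.mkₐ K Q).comp φ = Ideal.Quotient.mkₐ K Q := by
    ext i
    by_cases hi : i ∈ A
    · have : (X i : MvPolynomial σ K) ∈ Q := Ideal.subset_span ⟨i, hi, rfl⟩
      simp [φ, hi, Ideal.Quotient.eq_zero_iff_mem.mpr this]
    · simp [φ, hi]
  have hker : Q = RingHom.ker φ := by
    refine le_antisymm (Ideal.span_le.mpr ?_) fun f hf => ?_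
    · rintro _ ⟨i, hi, rfl⟩
      simp [φ, hi]
    · have h := DFunLike.congr_fun hφ f
      rw [AlgHom.comp_apply, (RingHom.mem_ker).mp hf, map_zero] at h
      exact Ideal.Quotient.eq_zero_iff_mem.mp h.symm
  rw [hker]
  exact RingHom.ker_isPrime _

theorem IsMonomialIdeal.span_X_image_mem_assOf [Finite σ] (hL : IsMonomialIdeal L) {u : σ →₀ ℕ}
    {A : Set σ} (h : MonomialColon L u A) :
    Ideal.span ((fun i => (X i : MvPolynomial σ K)) '' A) ∈ assOf L :=
  mem_assOf_iff.mpr ⟨isPrime_span_X_image A, monomial u 1, fun g => by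
    rw [← hL.colon_monomial h, Ideal.mem_colon_span_singleton]⟩

theorem IsMonomialIdeal.vnum_le (hL : IsMonomialIdeal L) {u : σ →₀ ℕ} {A : Set σ}
    (h : MonomialColon L u A) :
    vnum L (Ideal.span ((fun i => (X i : MvPolynomial σ K)) '' A)) ≤ u.degree :=
  Nat.sInf_le ⟨monomial u 1, isHomogeneous_monomial _ rfl, hL.colon_monomial h⟩

theorem IsMonomialIdeal.exists_degree_eq_vnum [Finite σ] (hL : IsMonomialIdeal L) {A : Set σ}
    (hA : Ideal.span ((fun i => (X i : MvPolynomial σ K)) '' A) ∈ assOf L) :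
    ∃ u : σ →₀ ℕ, MonomialColon L u A ∧
      u.degree = vnum L (Ideal.span ((fun i => (X i : MvPolynomial σ K)) '' A)) := by
  obtain ⟨hP, f₀, hf₀⟩ := mem_assOf_iff.mp hA
  obtain ⟨u₀, -, hu₀⟩ := hL.exists_monomialColon hf₀
  rw [setOf_X_mem_span_X_image] at hu₀
  obtain ⟨f, hf, hcolon⟩ := Nat.sInf_mem (s := {d : ℕ | ∃ f : MvPolynomial σ K,
      f.IsHomogeneous d ∧ L.colon (Ideal.span {f}) =
        Ideal.span ((fun i => (X i : MvPolynomial σ K)) '' A)})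
    ⟨_, monomial u₀ 1, isHomogeneous_monomial _ rfl, hL.colon_monomial hu₀⟩
  obtain ⟨u, hu, huA⟩ := hL.exists_monomialColon (f := f) (hP := hP) fun g => by
    rw [← hcolon, Ideal.mem_colon_span_singleton]
  rw [setOf_X_mem_span_X_image] at huA
  exact ⟨u, huA, degree_eq_of_mem_support hf hu⟩

end MonomialIdeals

section Sums

variable {σ τ K : Type} [Field K] {I : Ideal (MvPolynomial σ K)} {J : Ideal (MvPolynomial τ K)}

/-- The extension of `I + J` to the polynomial ring in the disjoint union of the variables. -/
abbrev sumIdeal (I : Ideal (MvPolynomial σ K)) (J : Ideal (MvPolynomial τ K)) :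
    Ideal (MvPolynomial (σ ⊕ τ) K) :=
  Ideal.map (rename Sum.inl) I + Ideal.map (rename Sum.inr) J

theorem exists_eq_sumElim (w : σ ⊕ τ →₀ ℕ) :
    ∃ (x : σ →₀ ℕ) (y : τ →₀ ℕ), w = Finsupp.sumElim x y :=
  ⟨_, _, (Finsupp.sumFinsuppEquivProdFinsupp.symm_apply_apply w).symm⟩

theorem sumElim_add_sumElim (x x' : σ →₀ ℕ) (y y' : τ →₀ ℕ) :
    Finsupp.sumElim x y + Finsupp.sumElim x' y' = Finsupp.sumElim (x + x') (y + y') := by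
  ext (i | j) <;> simp

theorem degree_sumElim (x : σ →₀ ℕ) (y : τ →₀ ℕ) :
    (Finsupp.sumElim x y).degree = x.degree + y.degree := by
  rw [Finsupp.sumElim_eq_add, map_add, Finsupp.degree_mapDomain, Finsupp.degree_mapDomain]

theorem sumElim_le_sumElim_iff {x x' : σ →₀ ℕ} {y y' : τ →₀ ℕ} :
    Finsupp.sumElim x y ≤ Finsupp.sumElim x' y' ↔ x ≤ x' ∧ y ≤ y' := by
  simp [Finsupp.le_def]

theorem monomial_sumElim (x : σ →₀ ℕ) (y : τ →₀ ℕ) :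
    monomial (Finsupp.sumElim x y) (1 : K) =
      rename Sum.inl (monomial x (1 : K)) * rename Sum.inr (monomial y (1 : K)) := by
  rw [rename_monomial, rename_monomial, monomial_mul, one_mul, Finsupp.sumElim_eq_add]

theorem sumIdeal_span_monomial (G : Set (σ →₀ ℕ)) (H : Set (τ →₀ ℕ)) :
    sumIdeal (Ideal.span ((fun a => monomial a (1 : K)) '' G))
        (Ideal.span ((fun a => monomial a (1 : K)) '' H)) =
      Ideal.span ((fun a => monomial a (1 : K)) ''
        ((fun a => Finsupp.sumElim a 0) '' G ∪ (fun b => Finsupp.sumElim 0 b) '' H)) := by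
  rw [sumIdeal, Ideal.map_span, Ideal.map_span, Submodule.add_eq_sup, ← Ideal.span_union,
    Set.image_union]
  simp only [Set.image_image, rename_monomial, Finsupp.sumElim_eq_add, Finsupp.mapDomain_zero,
    add_zero, zero_add]

theorem IsMonomialIdeal.sumIdeal (hI : IsMonomialIdeal I) (hJ : IsMonomialIdeal J) :
    IsMonomialIdeal (sumIdeal I J) := by
  obtain ⟨G, rfl⟩ := hI
  obtain ⟨H, rfl⟩ := hJ
  exact ⟨_, sumIdeal_span_monomial G H⟩

theorem monomial_mem_sumIdeal (hI : IsMonomialIdeal I) (hJ : IsMonomialIdeal J)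
    {x : σ →₀ ℕ} {y : τ →₀ ℕ} (h : monomial (Finsupp.sumElim x y) (1 : K) ∈ sumIdeal I J) :
    monomial x (1 : K) ∈ I ∨ monomial y (1 : K) ∈ J := by
  classical
  obtain ⟨G, rfl⟩ := hI
  obtain ⟨H, rfl⟩ := hJ
  rw [sumIdeal_span_monomial, mem_ideal_span_monomial_image] at h
  obtain ⟨_, ⟨g, hg, rfl⟩ | ⟨g, hg, rfl⟩, hle⟩ :=
    h (Finsupp.sumElim x y) (by simp [support_monomial])
  · exact .inl (monomial_mem_of_le (Ideal.subset_span ⟨g, hg, rfl⟩)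
      (sumElim_le_sumElim_iff.mp hle).1)
  · exact .inr (monomial_mem_of_le (Ideal.subset_span ⟨g, hg, rfl⟩)
      (sumElim_le_sumElim_iff.mp hle).2)

theorem monomial_mem_sumIdeal_pow {x : σ →₀ ℕ} {y : τ →₀ ℕ} {a b k : ℕ}
    (hx : monomial x (1 : K) ∈ I ^ a) (hy : monomial y (1 : K) ∈ J ^ b) (hk : k ≤ a + b) :
    monomial (Finsupp.sumElim x y) (1 : K) ∈ sumIdeal I J ^ k := by
  refine Ideal.pow_le_pow_right hk ?_
  rw [monomial_sumElim, pow_add]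
  refine Ideal.mul_mem_mul (Ideal.pow_right_mono le_sup_left a ?_)
    (Ideal.pow_right_mono le_sup_right b ?_)
  · rw [← Ideal.map_pow]; exact Ideal.mem_map_of_mem _ hx
  · rw [← Ideal.map_pow]; exact Ideal.mem_map_of_mem _ hy

theorem exists_mem_pow_of_monomial_mem_sumIdeal_pow (hI : IsMonomialIdeal I)
    (hJ : IsMonomialIdeal J) (k : ℕ) : ∀ {x : σ →₀ ℕ} {y : τ →₀ ℕ},
      monomial (Finsupp.sumElim x y) (1 : K) ∈ sumIdeal I J ^ k →
      ∃ a b, a + b = k ∧ monomial x (1 : K) ∈ I ^ a ∧ monomial y (1 : K) ∈ J ^ b := by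
  induction k with
  | zero => intro x y _; exact ⟨0, 0, rfl, by simp, by simp⟩
  | succ k ih =>
    intro x y h
    rw [pow_succ] at h
    obtain ⟨g, g', hg, hg', hle⟩ := ((hI.sumIdeal hJ).pow k).exists_add_le_of_monomial_mem_mul
      (hI.sumIdeal hJ) h
    obtain ⟨x₁, y₁, rfl⟩ := exists_eq_sumElim g
    obtain ⟨x₂, y₂, rfl⟩ := exists_eq_sumElim g'
    rw [sumElim_add_sumElim, sumElim_le_sumElim_iff] at hle
    obtain ⟨a, b, rfl, ha, hb⟩ := ih hg
    rcases monomial_mem_sumIdeal hI hJ hg' with h₂ | h₂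
    · refine ⟨a + 1, b, by omega, monomial_mem_of_le ?_ hle.1,
        monomial_mem_of_le hb (le_self_add.trans hle.2)⟩
      rw [pow_succ, ← one_mul (1 : K), ← monomial_mul]
      exact Ideal.mul_mem_mul ha h₂
    · refine ⟨a, b + 1, by omega, monomial_mem_of_le ha (le_self_add.trans hle.1),
        monomial_mem_of_le ?_ hle.2⟩
      rw [pow_succ, ← one_mul (1 : K), ← monomial_mul]
      exact Ideal.mul_mem_mul hb h₂

theorem sumIdeal_span_X (A : Set σ) (B : Set τ) :
    sumIdeal (Ideal.span ((fun i => (X i : MvPolynomial σ K)) '' A))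
        (Ideal.span ((fun i => (X i : MvPolynomial τ K)) '' B)) =
      Ideal.span ((fun i => (X i : MvPolynomial (σ ⊕ τ) K)) '' (Sum.inl '' A ∪ Sum.inr '' B)) := by
  rw [sumIdeal, Ideal.map_span, Ideal.map_span, Submodule.add_eq_sup, ← Ideal.span_union,
    Set.image_union]
  simp only [Set.image_image, rename_X]

theorem exists_mem_union_sumElim_iff {A : Set σ} {B : Set τ} {w : σ →₀ ℕ} {z : τ →₀ ℕ} :
    (∃ i ∈ Sum.inl '' A ∪ Sum.inr '' B, Finsupp.sumElim w z i ≠ 0) ↔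
      (∃ i ∈ A, w i ≠ 0) ∨ ∃ j ∈ B, z j ≠ 0 := by
  simp [or_and_right, exists_or]

theorem MonomialColon.sumIdeal (hI : IsMonomialIdeal I) (hJ : IsMonomialIdeal J)
    {x : σ →₀ ℕ} {y : τ →₀ ℕ} {A : Set σ} {B : Set τ} (hA : A.Nonempty) (hB : B.Nonempty)
    {a b : ℕ} (hx : MonomialColon (I ^ (a + 1)) x A) (hy : MonomialColon (J ^ (b + 1)) y B) :
    MonomialColon (sumIdeal I J ^ (a + b + 1)) (Finsupp.sumElim x y)
      (Sum.inl '' A ∪ Sum.inr '' B) := by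
  obtain ⟨i, hi⟩ := hA
  obtain ⟨j, hj⟩ := hB
  have hxa : monomial x (1 : K) ∈ I ^ a :=
    hI.monomial_mem_pow_of_add_single i a ((hx _).mpr ⟨i, hi, by simp⟩)
  have hyb : monomial y (1 : K) ∈ J ^ b :=
    hJ.monomial_mem_pow_of_add_single j b ((hy _).mpr ⟨j, hj, by simp⟩)
  intro w
  obtain ⟨w, z, rfl⟩ := exists_eq_sumElim w
  rw [sumElim_add_sumElim, exists_mem_union_sumElim_iff, ← hx, ← hy]
  constructor
  · intro h
    obtain ⟨c, d, hcd, hc, hd⟩ := exists_mem_pow_of_monomial_mem_sumIdeal_pow hI hJ _ h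
    rcases Nat.lt_or_ge a c with hac | hac
    · exact .inl (Ideal.pow_le_pow_right hac hc)
    · exact .inr (Ideal.pow_le_pow_right (by omega) hd)
  · rintro (h | h)
    · exact monomial_mem_sumIdeal_pow h (monomial_mem_of_le hyb le_self_add) (by omega)
    · exact monomial_mem_sumIdeal_pow (monomial_mem_of_le hxa le_self_add) h (by omega)

theorem exists_not_mem_pow_succ {L : Ideal (MvPolynomial σ K)} {x : σ →₀ ℕ} {k : ℕ}
    (h : monomial x (1 : K) ∉ L ^ k) :
    ∃ a, monomial x (1 : K) ∈ L ^ a ∧ monomial x (1 : K) ∉ L ^ (a + 1) := by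
  by_contra! hcon
  refine h ?_
  clear h
  induction k with
  | zero => simp
  | succ k ih => exact hcon k ih

/-- A monomial whose colon in a power of `I + J` is a monomial prime splits into monomials whose
colons in complementary powers of `I` and `J` are the two parts of that prime. -/
theorem MonomialColon.of_sumIdeal (hI : IsMonomialIdeal I) (hJ : IsMonomialIdeal J)
    (hI0 : I ≠ ⊥) (hJ0 : J ≠ ⊥) {x : σ →₀ ℕ} {y : τ →₀ ℕ} {A : Set σ} {B : Set τ} {k : ℕ}
    (h : MonomialColon (_root_.sumIdeal I J ^ k) (Finsupp.sumElim x y)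
      (Sum.inl '' A ∪ Sum.inr '' B)) :
    A.Nonempty ∧ B.Nonempty ∧ ∃ a b, a + b + 1 = k ∧
      MonomialColon (I ^ (a + 1)) x A ∧ MonomialColon (J ^ (b + 1)) y B := by
  have h' : ∀ (w : σ →₀ ℕ) (z : τ →₀ ℕ),
      monomial (Finsupp.sumElim (x + w) (y + z)) (1 : K) ∈ _root_.sumIdeal I J ^ k ↔
        (∃ i ∈ A, w i ≠ 0) ∨ ∃ j ∈ B, z j ≠ 0 := fun w z => by
    rw [← exists_mem_union_sumElim_iff, ← h, sumElim_add_sumElim]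
  have hxy : monomial (Finsupp.sumElim x y) (1 : K) ∉ _root_.sumIdeal I J ^ k := by
    simpa using h' 0 0
  obtain ⟨g, hg⟩ := hI.exists_monomial_mem hI0
  obtain ⟨g', hg'⟩ := hJ.exists_monomial_mem hJ0
  have hA : A.Nonempty := by
    have := (h' (k • g) 0).mp (monomial_mem_sumIdeal_pow (a := k) (b := 0)
      (monomial_mem_of_le (monomial_mem_pow_smul hg k) le_add_self) (by simp) le_rfl)
    simp only [Finsupp.zero_apply, ne_eq, not_true_eq_false, and_false, exists_false,
      or_false] at this
    exact this.imp fun _ hi => hi.1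
  have hB : B.Nonempty := by
    have := (h' 0 (k • g')).mp (monomial_mem_sumIdeal_pow (a := 0) (b := k) (by simp)
      (monomial_mem_of_le (monomial_mem_pow_smul hg' k) le_add_self) (by omega))
    simp only [Finsupp.zero_apply, ne_eq, not_true_eq_false, and_false, exists_false,
      false_or] at this
    exact this.imp fun _ hi => hi.1
  refine ⟨hA, hB, ?_⟩
  obtain ⟨a, hxa, hxa'⟩ := exists_not_mem_pow_succ (L := I) (x := x) (k := k) fun hx =>
    hxy (monomial_mem_sumIdeal_pow hx (b := 0) (by simp) le_rfl)
  obtain ⟨b, hyb, hyb'⟩ := exists_not_mem_pow_succ (L := J) (x := y) (k := k) fun hy =>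
    hxy (monomial_mem_sumIdeal_pow (a := 0) (by simp) hy (by omega))
  have hlt : a + b < k := by
    by_contra! hle
    exact hxy (monomial_mem_sumIdeal_pow hxa hyb hle)
  have hxA : ∀ i ∈ A, monomial (x + Finsupp.single i 1) (1 : K) ∈ I ^ (k - b) := fun i hi => by
    obtain ⟨c, d, hcd, hc, hd⟩ := exists_mem_pow_of_monomial_mem_sumIdeal_pow hI hJ k
      ((h' (Finsupp.single i 1) 0).mpr (.inl ⟨i, hi, by simp⟩))
    rw [add_zero] at hd
    have hdb : d ≤ b := by
      by_contra! hbd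
      exact hyb' (Ideal.pow_le_pow_right hbd hd)
    exact Ideal.pow_le_pow_right (by omega) hc
  have hyB : ∀ j ∈ B, monomial (y + Finsupp.single j 1) (1 : K) ∈ J ^ (k - a) := fun j hj => by
    obtain ⟨c, d, hcd, hc, hd⟩ := exists_mem_pow_of_monomial_mem_sumIdeal_pow hI hJ k
      ((h' 0 (Finsupp.single j 1)).mpr (.inr ⟨j, hj, by simp⟩))
    rw [add_zero] at hc
    have hca : c ≤ a := by
      by_contra! hac
      exact hxa' (Ideal.pow_le_pow_right hac hc)
    exact Ideal.pow_le_pow_right (by omega) hd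
  have hk : a + b + 1 = k := by
    obtain ⟨i, hi⟩ := hA
    by_contra hne
    exact hxa' (hI.monomial_mem_pow_of_add_single i (a + 1)
      (Ideal.pow_le_pow_right (by omega) (hxA i hi)))
  refine ⟨a, b, hk, fun w => ⟨fun hw => ?_, ?_⟩, fun w => ⟨fun hw => ?_, ?_⟩⟩
  · simpa using (h' w 0).mp (monomial_mem_sumIdeal_pow (a := a + 1) (b := b) hw
      (by simpa using hyb) (by omega))
  · rintro ⟨i, hi, hwi⟩
    refine monomial_mem_of_le (Ideal.pow_le_pow_right (by omega) (hxA i hi))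
      (add_le_add_right ?_ x)
    simpa [Nat.one_le_iff_ne_zero] using hwi
  · simpa using (h' 0 w).mp (monomial_mem_sumIdeal_pow (a := a) (b := b + 1)
      (by simpa using hxa) hw (by omega))
  · rintro ⟨i, hi, hwi⟩
    refine monomial_mem_of_le (Ideal.pow_le_pow_right (by omega) (hyB i hi))
      (add_le_add_right ?_ y)
    simpa [Nat.one_le_iff_ne_zero] using hwi

theorem sumIdeal_ne_top (hI : IsMonomialIdeal I) (hJ : IsMonomialIdeal J) (hI1 : I ≠ ⊤)
    (hJ1 : J ≠ ⊤) : sumIdeal I J ≠ ⊤ := by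
  intro h
  have h0 : monomial (Finsupp.sumElim (0 : σ →₀ ℕ) (0 : τ →₀ ℕ)) (1 : K) ∈ sumIdeal I J :=
    h ▸ Submodule.mem_top
  rcases monomial_mem_sumIdeal hI hJ h0 with h | h
  · exact hI1 ((Ideal.eq_top_iff_one I).mpr h)
  · exact hJ1 ((Ideal.eq_top_iff_one J).mpr h)

end Sums

/-- Corollary 4.2: for nonzero proper monomial ideals `I ⊂ R`, `J ⊂ T`
identified with their extensions to `S`, and `k ≥ 1`,
`v((I+J)^k)` is the minimum, over pairs of nonzero monomial primes `p ⊂ R`, `q ⊂ T` with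
`p + q ∈ Ass((I+J)^k)` and over `0 ≤ ℓ < k` with `p ∈ Ass(I^{k−ℓ})`, `q ∈ Ass(J^{ℓ+1})`,
of `v_p(I^{k−ℓ}) + v_q(J^{ℓ+1})`. -/
theorem stmt8 {K : Type} [Field K] {n m : ℕ}
    (I : Ideal (MvPolynomial (Fin n) K)) (J : Ideal (MvPolynomial (Fin m) K))
    (hInz : I ≠ ⊥) (hIpr : I ≠ ⊤) (hImon : IsMonomialIdeal I)
    (hJnz : J ≠ ⊥) (hJpr : J ≠ ⊤) (hJmon : IsMonomialIdeal J)
    (eI eJ : Ideal (MvPolynomial (Fin n ⊕ Fin m) K))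
    (heI : eI = Ideal.map (rename Sum.inl) I)
    (heJ : eJ = Ideal.map (rename Sum.inr) J)
    (k : ℕ) (hk : 1 ≤ k) :
    vnumber ((eI + eJ) ^ k) =
      sInf {d : ℕ | ∃ (A : Set (Fin n)) (B : Set (Fin m)), A.Nonempty ∧ B.Nonempty ∧
        ∃ (p : Ideal (MvPolynomial (Fin n) K)) (q : Ideal (MvPolynomial (Fin m) K)),
          p = Ideal.span ((fun i => (X i : MvPolynomial (Fin n) K)) '' A) ∧
          q = Ideal.span ((fun i => (X i : MvPolynomial (Fin m) K)) '' B) ∧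
          Ideal.map (rename Sum.inl) p + Ideal.map (rename Sum.inr) q ∈
            assOf ((eI + eJ) ^ k) ∧
          ∃ ℓ : ℕ, ℓ < k ∧ p ∈ assOf (I ^ (k - ℓ)) ∧ q ∈ assOf (J ^ (ℓ + 1)) ∧
            d = vnum (I ^ (k - ℓ)) p + vnum (J ^ (ℓ + 1)) q} := by
  subst heI heJ
  have hLmon : IsMonomialIdeal (sumIdeal I J ^ k) := (hImon.sumIdeal hJmon).pow k
  have hne : sumIdeal I J ^ k ≠ ⊤ := fun h =>
    sumIdeal_ne_top hImon hJmon hIpr hJpr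
      (top_le_iff.mp (h ▸ Ideal.pow_le_self (by omega)))
  have : Nontrivial (MvPolynomial (Fin n ⊕ Fin m) K ⧸ sumIdeal I J ^ k) :=
    Ideal.Quotient.nontrivial_iff.mpr hne
  set D := {d : ℕ | ∃ (A : Set (Fin n)) (B : Set (Fin m)), _}
  have mem_of_monomialColon : ∀ {u C}, MonomialColon (sumIdeal I J ^ k) u C →
      u.degree ∈ {d : ℕ | ∃ p ∈ assOf (sumIdeal I J ^ k),
        ∃ f : MvPolynomial (Fin n ⊕ Fin m) K, f.IsHomogeneous d ∧
        (sumIdeal I J ^ k).colon (Ideal.span {f}) = p} := fun {u C} h =>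
    ⟨_, hLmon.span_X_image_mem_assOf h, monomial u 1, isHomogeneous_monomial _ rfl,
      hLmon.colon_monomial h⟩
  have exists_mem_le : ∀ {u C}, MonomialColon (sumIdeal I J ^ k) u C → ∃ d ∈ D, d ≤ u.degree := by
    intro u C h
    have hass := hLmon.span_X_image_mem_assOf h
    obtain ⟨x, y, rfl⟩ := exists_eq_sumElim u
    rw [← Set.image_preimage_inl_union_image_preimage_inr C] at h hass
    rw [← sumIdeal_span_X] at hass
    obtain ⟨hA, hB, a, b, rfl, hx, hy⟩ := h.of_sumIdeal hImon hJmon hInz hJnz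
    have hsub : a + b + 1 - b = a + 1 := by omega
    refine ⟨_, ⟨_, _, hA, hB, _, _, rfl, rfl, hass, b, by omega,
      ?_, (hJmon.pow _).span_X_image_mem_assOf hy, rfl⟩, ?_⟩
    · rw [hsub]
      exact (hImon.pow _).span_X_image_mem_assOf hx
    · rw [hsub, degree_sumElim]
      exact add_le_add ((hImon.pow _).vnum_le hx) ((hJmon.pow _).vnum_le hy)
  obtain ⟨P, hP⟩ := associatedPrimes.nonempty (MvPolynomial (Fin n ⊕ Fin m) K)
    (MvPolynomial (Fin n ⊕ Fin m) K ⧸ sumIdeal I J ^ k)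
  obtain ⟨hPprime, f, hf⟩ := mem_assOf_iff.mp hP
  obtain ⟨u, -, hu⟩ := hLmon.exists_monomialColon hf
  refine le_antisymm (le_csInf ((exists_mem_le hu).imp fun _ h => h.1) ?_)
    (le_csInf ⟨_, mem_of_monomialColon hu⟩ ?_)
  · rintro _ ⟨A, B, hA, hB, _, _, rfl, rfl, -, ℓ, hℓ, hp, hq, rfl⟩
    obtain ⟨x, hx, hxdeg⟩ := (hImon.pow _).exists_degree_eq_vnum hp
    obtain ⟨y, hy, hydeg⟩ := (hJmon.pow _).exists_degree_eq_vnum hq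
    rw [← hxdeg, ← hydeg, ← degree_sumElim]
    obtain ⟨a, rfl⟩ : ∃ a, k = a + ℓ + 1 := ⟨k - ℓ - 1, by omega⟩
    rw [show a + ℓ + 1 - ℓ = a + 1 by omega] at hx
    exact Nat.sInf_le (mem_of_monomialColon (hx.sumIdeal hImon hJmon hA hB hy))
  · rintro d ⟨Q, hQ, f, hfd, hcolon⟩
    have hQprime := (mem_assOf_iff.mp hQ).1
    obtain ⟨u, hu, huC⟩ := hLmon.exists_monomialColon (f := f) (P := Q) fun g => by
      rw [← hcolon, Ideal.mem_colon_span_singleton]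
    obtain ⟨d', hd', hle⟩ := exists_mem_le huC
    rw [← degree_eq_of_mem_support hfd hu]
    exact (Nat.sInf_le hd').trans hle
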